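/- arXiv:2212.10627 — 3 statements merged into one kernel-verified Lean document; each statement's English description precedes it below -/
import Mathlib

section
/- Let r ≥ 5 be a rational prime, K a totally real number field, L := K(ζ_r), and p a rational prime. Suppose (x, y, z) ∈ 𝒪_L³ is a nontrivial solution of x^r + y^r = z^p with x, y, z pairwise coprime. Then for all 0 ≤ i < j ≤ r−1, no prime ideal 𝔭 of 𝒪_L that does not lie above r divides both x + ζ_r^i·y and x + ζ_r^j·y. -/
open NumberField IsDedekindDomain IntermediateField
open scoped Classical

theorem factors_coprime_outside_r
    (r : ℕ) (hr : r.Prime) (hr5 : 5 ≤ r)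
    (K : Type) [Field K] [NumberField K]
    (hTR : ∀ v : InfinitePlace K, v.IsReal)
    (ζ : AlgebraicClosure K) (hζ : IsPrimitiveRoot ζ r)
    -- `L = K(ζ_r)`
    (L : IntermediateField K (AlgebraicClosure K)) [NumberField L]
    (hL : L = K⟮ζ⟯)
    -- `ζ_r` as an element of `𝒪_L`
    (η : 𝓞 L) (hη : ((η : L) : AlgebraicClosure K) = ζ)
    (p : ℕ) (hp : p.Prime)
    (x y z : 𝓞 L) (hsol : x ^ r + y ^ r = z ^ p)
    (hnt : x * y * z ≠ 0)
    (hxy : IsCoprime x y) (hyz : IsCoprime y z) (hxz : IsCoprime x z) :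
    ∀ i j : ℕ, i < j → j ≤ r - 1 →
      ∀ 𝔭 : HeightOneSpectrum (𝓞 L), (r : 𝓞 L) ∉ 𝔭.asIdeal →
        ¬ (x + η ^ i * y ∈ 𝔭.asIdeal ∧ x + η ^ j * y ∈ 𝔭.asIdeal) := by
  intro i j hij hj 𝔭 hr𝔭 ⟨h1, h2⟩
  have hP : 𝔭.asIdeal.IsPrime := 𝔭.isPrime
  have hprim : IsPrimitiveRoot η r := by
    have h1 : IsPrimitiveRoot (algebraMap L (AlgebraicClosure K) (algebraMap (𝓞 L) L η)) r := by
      have : algebraMap L (AlgebraicClosure K) (algebraMap (𝓞 L) L η) = ζ := hη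
      rw [this]; exact hζ
    have h2 := h1.of_map_of_injective (algebraMap L (AlgebraicClosure K)).injective
    exact h2.of_map_of_injective (FaithfulSMul.algebraMap_injective (𝓞 L) L)
  have hcop : (j - i).Coprime r :=
    (Nat.coprime_of_lt_prime (by omega) (by omega) hr).symm
  have hμ : IsPrimitiveRoot (η ^ (j - i)) r := hprim.pow_of_coprime _ hcop
  have hunit : IsUnit (η ^ i) := (hprim.isUnit hr.ne_zero).pow i
  have hdiff : η ^ i * ((η ^ (j - i) - 1) * y) ∈ 𝔭.asIdeal := by
    have h := 𝔭.asIdeal.sub_mem h2 h1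
    have e : η ^ j = η ^ i * η ^ (j - i) := by rw [← pow_add]; congr 1; omega
    rw [e] at h
    convert h using 1
    ring
  rw [Ideal.unit_mul_mem_iff_mem _ hunit] at hdiff
  rcases hP.mem_or_mem hdiff with h | h
  · apply hr𝔭
    have hs := hμ.geom_sum_eq_zero (by omega)
    have hq : Ideal.Quotient.mk 𝔭.asIdeal (η ^ (j - i)) = 1 := by
      rw [← map_one (Ideal.Quotient.mk 𝔭.asIdeal)]
      exact Ideal.Quotient.eq.2 h
    have := congrArg (Ideal.Quotient.mk 𝔭.asIdeal) hs
    rw [map_sum] at this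
    simp only [map_pow _ (η ^ (j - i)), hq, one_pow, Finset.sum_const, Finset.card_range,
      nsmul_eq_mul, mul_one, map_zero] at this
    rw [← Ideal.Quotient.eq_zero_iff_mem, map_natCast]
    exact this
  · have hx : x ∈ 𝔭.asIdeal := by
      have := 𝔭.asIdeal.sub_mem h1 (𝔭.asIdeal.mul_mem_left (η ^ i) h)
      simpa using this
    obtain ⟨a, b, hab⟩ := hxy
    apply hP.ne_top
    rw [Ideal.eq_top_iff_one, ← hab]
    exact 𝔭.asIdeal.add_mem (𝔭.asIdeal.mul_mem_left _ hx) (𝔭.asIdeal.mul_mem_left _ h)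
end

section
/- Let d be a square-free positive integer with d ≡ 5 (mod 8), let K := ℚ(√d) (so 𝒪_K = ℤ[(1+√d)/2]), and let r be an odd rational prime with r ≢ 1 (mod 8) and r ≢ d (mod 8). Then there is no v ∈ 𝒪_K with r ≡ v² (mod 32·𝒪_K). -/
open NumberField

theorem aux_rat_int (d : ℕ) (hd : Squarefree d) (q : ℚ) (m : ℤ) (h : (d : ℚ) * q ^ 2 = m) :
    ∃ z : ℤ, q = z := by
  have hden : (q.den : ℚ) ≠ 0 := by exact_mod_cast q.den_nz
  have h1 : (d : ℤ) * q.num ^ 2 = m * (q.den : ℤ) ^ 2 := by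
    have : (d : ℚ) * (q.num : ℚ) ^ 2 = m * (q.den : ℚ) ^ 2 := by
      have hq : (q.num : ℚ) = q * q.den := (Rat.mul_den_eq_num q).symm
      rw [hq, ← h]; ring
    exact_mod_cast this
  have h2 : ((q.den : ℤ)) ^ 2 ∣ (d : ℤ) * q.num ^ 2 := ⟨m, by rw [h1]; ring⟩
  have hc : IsCoprime ((q.den : ℤ) ^ 2) (q.num ^ 2) := by
    apply IsCoprime.pow
    rw [Int.isCoprime_iff_nat_coprime]
    simpa using q.reduced.symm
  have h3 : ((q.den : ℤ)) ^ 2 ∣ (d : ℤ) := hc.dvd_of_dvd_mul_right h2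
  have h4 : q.den * q.den ∣ d := by
    rw [← sq]; exact_mod_cast h3
  have h5 := Nat.isUnit_iff.mp (hd _ h4)
  exact ⟨q.num, ((Rat.den_eq_one_iff q).mp h5).symm⟩

theorem aux_mod (d r t q T : ℤ) (hd : d % 8 = 5) (hodd : r % 2 = 1) (h1 : r % 8 ≠ 1)
    (h5 : r % 8 ≠ 5) (h : t ^ 2 + d * q ^ 2 = 4 * (r - 16 * T)) : False := by
  obtain ⟨e, rfl⟩ : ∃ e, d = 8 * e + 5 := ⟨d / 8, by omega⟩
  have sqm : ∀ x : ℤ, (∃ y, x = 2 * y) ∨ ∃ y, x ^ 2 = 8 * y + 1 := by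
    intro x
    rcases Int.even_or_odd' x with ⟨y, hy | hy⟩
    · exact Or.inl ⟨y, hy⟩
    · right
      obtain ⟨k, hk⟩ := Int.even_mul_succ_self y
      exact ⟨k, by rw [hy]; linear_combination 4 * hk⟩
  have sq4 : ∀ y : ℤ, (2 * y) ^ 2 = 4 * y ^ 2 := fun y => by ring
  rcases sqm t with ⟨u, rfl⟩ | ⟨u, hu⟩ <;> rcases sqm q with ⟨w, rfl⟩ | ⟨w, hw⟩
  · have h' : u ^ 2 + 8 * (e * w ^ 2) + 5 * w ^ 2 = r - 16 * T := by linarith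
    rcases sqm u with ⟨a, rfl⟩ | ⟨a, ha⟩ <;> rcases sqm w with ⟨b, rfl⟩ | ⟨b, hb⟩
    · rw [sq4, sq4] at h'
      omega
    · rw [sq4] at h'
      obtain ⟨c, rfl⟩ | ⟨c, hc⟩ := sqm a
      · rw [sq4] at h'; omega
      · omega
    · rw [sq4] at h'
      obtain ⟨c, rfl⟩ | ⟨c, hc⟩ := sqm b
      · rw [sq4] at h'; omega
      · omega
    · omega
  · have h' : 4 * u ^ 2 + 8 * (e * q ^ 2) + 5 * q ^ 2 = 4 * (r - 16 * T) := by linarith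
    omega
  · have h' : t ^ 2 + 32 * (e * w ^ 2) + 20 * w ^ 2 = 4 * (r - 16 * T) := by linarith
    omega
  · have h' : t ^ 2 + 8 * (e * q ^ 2) + 5 * q ^ 2 = 4 * (r - 16 * T) := by linarith
    omega

theorem not_square_mod_32_in_real_quadratic_5_mod_8
    (d : ℕ) (hd : Squarefree d) (hdpos : 0 < d) (hd8 : d % 8 = 5)
    -- `K = ℚ(√d)`
    (K : Type*) [Field K] [NumberField K]
    (s : K) (hs : s ^ 2 = (d : K)) (hK2 : Module.finrank ℚ K = 2)
    (r : ℕ) (hr : r.Prime) (hodd : Odd r)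
    (hr8 : r % 8 ≠ 1) (hrd8 : r % 8 ≠ d % 8) :
    ¬ ∃ v : 𝓞 K, (r : 𝓞 K) - v ^ 2 ∈ Ideal.span ({(32 : 𝓞 K)} : Set (𝓞 K)) := by
  rintro ⟨v, hv⟩
  obtain ⟨w, hw⟩ := Ideal.mem_span_singleton.mp hv
  have hw' : (r : K) - (v : K) ^ 2 = 32 * (w : K) := by
    have := congrArg (algebraMap (𝓞 K) K) hw
    rwa [map_sub, map_pow, map_mul, map_natCast, map_ofNat] at this
  -- irrationality of `s`
  have hirr : ∀ q : ℚ, (q : K) ≠ s := by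
    intro q hq
    have h1 : q ^ 2 = (d : ℚ) := by
      rw [← hq] at hs; exact_mod_cast hs
    obtain ⟨z, rfl⟩ := aux_rat_int 1 squarefree_one q d (by simpa using h1)
    have h2 : z ^ 2 = (d : ℤ) := by exact_mod_cast h1
    have h3 : z * z % 8 = 5 := by rw [← sq, h2]; omega
    have h4 : z % 8 = 0 ∨ z % 8 = 1 ∨ z % 8 = 2 ∨ z % 8 = 3 ∨ z % 8 = 4 ∨ z % 8 = 5 ∨
      z % 8 = 6 ∨ z % 8 = 7 := by omega
    rcases h4 with h | h | h | h | h | h | h | h <;> simp [Int.mul_emod, h] at h3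
  have hli : LinearIndependent ℚ ![(1 : K), s] := by
    rw [LinearIndependent.pair_iff' one_ne_zero]
    intro a ha
    apply hirr a
    rw [← ha, Rat.smul_def, mul_one]
  let b := basisOfLinearIndependentOfCardEqFinrank hli (by simp [hK2])
  have hb : ⇑b = ![(1 : K), s] := coe_basisOfLinearIndependentOfCardEqFinrank hli _
  have hb0 : b 0 = 1 := by simp [hb]
  have hb1 : b 1 = s := by simp [hb]
  have htr : Algebra.trace ℚ K s = 0 := by
    rw [Algebra.trace_eq_matrix_trace b, Matrix.trace, Fin.sum_univ_two]
    simp only [Matrix.diag, Algebra.leftMulMatrix_eq_repr_mul]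
    have e1 : s * b 0 = b 1 := by rw [hb0, hb1, mul_one]
    have e2 : s * b 1 = (d : ℚ) • b 0 := by
      rw [hb0, hb1, ← sq, hs, Rat.smul_def]; simp
    rw [e1, e2, map_smul]
    simp
  have htrq : ∀ x : ℚ, Algebra.trace ℚ K (x : K) = 2 * x := by
    intro x
    have := Algebra.trace_algebraMap (S := K) x
    rw [hK2] at this
    simpa using this
  obtain ⟨p, q, hpq⟩ : ∃ p q : ℚ, (v : K) = p + q * s := by
    refine ⟨b.repr v 0, b.repr v 1, ?_⟩
    have := b.sum_repr (v : K)
    rw [Fin.sum_univ_two, hb0, hb1, Rat.smul_def, Rat.smul_def, mul_one] at this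
    exact this.symm
  have htrl : ∀ x y : ℚ, Algebra.trace ℚ K ((x : K) + y * s) = 2 * x := by
    intro x y
    rw [map_add, htrq, ← Rat.smul_def, map_smul, htr]; simp
  have hint : ∀ x : 𝓞 K, ∃ z : ℤ, Algebra.trace ℚ K (x : K) = z := by
    intro x
    have h : IsIntegral ℤ (Algebra.trace ℚ K (x : K)) :=
      Algebra.isIntegral_trace (RingOfIntegers.isIntegral_coe x)
    obtain ⟨z, hz⟩ := IsIntegrallyClosed.isIntegral_iff.mp h
    exact ⟨z, by simpa using hz.symm⟩
  obtain ⟨t, ht⟩ := hint v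
  obtain ⟨T, hT⟩ := hint w
  rw [hpq, htrl] at ht
  have h32 : Algebra.trace ℚ K (32 * (w : K)) = 32 * T := by
    have : (32 : K) * (w : K) = (32 : ℚ) • (w : K) := by rw [Rat.smul_def]; norm_num
    rw [this, map_smul, hT]; simp
  have hexp : (r : K) - (v : K) ^ 2 =
      ((r - p ^ 2 - d * q ^ 2 : ℚ) : K) + ((-2 * p * q : ℚ) : K) * s := by
    rw [hpq]; push_cast; linear_combination (-(q : K) ^ 2) * hs
  rw [← hw', hexp, htrl] at h32
  have hmain : (t : ℚ) ^ 2 + d * (2 * q) ^ 2 = 4 * (r - 16 * T) := by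
    rw [← ht]; linear_combination (-2) * h32
  obtain ⟨Q, hQ⟩ := aux_rat_int d hd (2 * q) (4 * (r - 16 * T) - t ^ 2) (by
    push_cast; linear_combination hmain)
  rw [hQ] at hmain
  have hZ : t ^ 2 + (d : ℤ) * Q ^ 2 = 4 * ((r : ℤ) - 16 * T) := by exact_mod_cast hmain
  have ho := Nat.odd_iff.mp hodd
  exact aux_mod d r t Q T (by omega) (by omega) (by omega) (by omega) hZ
end

section
/- Let d be a square-free positive integer with d ≡ 2 or 3 (mod 4), let K := ℚ(√d) (so 𝒪_K = ℤ[√d]), and let r be an odd rational prime with r ≢ 1 (mod 8) and r ≢ d (mod 8). Then there is no v ∈ 𝒪_K with r ≡ v² (mod 16·𝒪_K). -/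
open NumberField

lemma aux_rat_int_s17 (x : ℚ) (h : IsIntegral ℤ x) : ∃ n : ℤ, (n : ℚ) = x := by
  obtain ⟨n, hn⟩ := IsIntegrallyClosed.isIntegral_iff.mp h
  exact ⟨n, by simpa using hn⟩

lemma aux_rep (d : ℕ) (hd : Squarefree d) (hdpos : 0 < d) (hd4 : d % 4 = 2 ∨ d % 4 = 3)
    (K : Type*) [Field K] [NumberField K]
    (s : K) (hs : s ^ 2 = (d : K)) (hK2 : Module.finrank ℚ K = 2) :
    (∀ x y : ℚ, (x : K) + y * s = 0 → x = 0 ∧ y = 0) ∧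
    ∀ v : 𝓞 K, ∃ a b : ℤ, (v : K) = a + b * s := by
  have hirr : ∀ t : ℚ, (t : K) ≠ s := by
    intro t ht
    have h1 : t ^ 2 = (d : ℚ) := by
      rw [← ht] at hs
      exact_mod_cast hs
    have h2 : IsIntegral ℤ t := by
      refine IsIntegral.of_pow (n := 2) (by norm_num) ?_
      rw [h1]
      exact_mod_cast (isIntegral_algebraMap (R := ℤ) (A := ℚ) (x := (d : ℤ)))
    obtain ⟨n, hn⟩ := aux_rat_int_s17 t h2
    rw [← hn] at h1
    have h3 : n ^ 2 = (d : ℤ) := by exact_mod_cast h1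
    rcases Int.even_or_odd' n with ⟨k, rfl | rfl⟩ <;> ring_nf at h3 <;> omega
  have hli : ∀ x y : ℚ, (x : K) + y * s = 0 → x = 0 ∧ y = 0 := by
    intro x y h
    by_cases hy : y = 0
    · subst hy
      simpa using h
    · exfalso
      apply hirr (-x / y)
      have : (y : K) ≠ 0 := by exact_mod_cast hy
      push_cast
      field_simp
      linear_combination -h
  refine ⟨hli, ?_⟩
  intro v
  have hind : LinearIndependent ℚ ![(1 : K), s] := by
    rw [LinearIndependent.pair_iff]
    intro x y h
    apply hli
    simpa [Algebra.smul_def] using h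
  have hspan := hind.span_eq_top_of_card_eq_finrank (by simp [hK2])
  have hv : (v : K) ∈ Submodule.span ℚ (Set.range ![(1 : K), s]) := by rw [hspan]; trivial
  simp only [Matrix.range_cons, Matrix.range_empty, Set.union_empty, Set.singleton_union] at hv
  rw [Submodule.mem_span_pair] at hv
  obtain ⟨x, y, hxy⟩ := hv
  replace hxy : (x : K) + y * s = v := by simpa [Algebra.smul_def] using hxy
  have : Algebra.IsQuadraticExtension ℚ K := ⟨hK2⟩
  obtain ⟨σ, hσ⟩ : ∃ σ : K ≃ₐ[ℚ] K, σ s ≠ s := by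
    by_contra! hcon
    obtain ⟨t, ht⟩ := (IsGalois.mem_range_algebraMap_iff_fixed (F := ℚ) s).mpr hcon
    exact hirr t (by simpa using ht)
  have hσs : σ s = -s := by
    have h1 : (σ s) ^ 2 = s ^ 2 := by rw [← map_pow, hs, map_natCast]
    exact (sq_eq_sq_iff_eq_or_eq_neg.mp h1).resolve_left hσ
  have hσv : σ v = (x : K) - y * s := by
    rw [← hxy, map_add, map_mul, hσs, map_ratCast, map_ratCast]; ring
  have iv : IsIntegral ℤ (v : K) := v.isIntegral_coe
  have isv : IsIntegral ℤ (σ (v : K)) := iv.map σ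
  have hA : IsIntegral ℤ (2 * x) := by
    rw [← isIntegral_algebraMap_iff (algebraMap ℚ K).injective]
    have h : algebraMap ℚ K (2 * x) = v + σ v := by
      rw [hσv, ← hxy]; simp; ring
    rw [h]
    exact iv.add isv
  have hN : IsIntegral ℤ (x ^ 2 - d * y ^ 2) := by
    rw [← isIntegral_algebraMap_iff (algebraMap ℚ K).injective]
    have h : algebraMap ℚ K (x ^ 2 - d * y ^ 2) = v * σ v := by
      rw [hσv, ← hxy]; simp; linear_combination (y : K) ^ 2 * hs
    rw [h]
    exact iv.mul isv
  obtain ⟨A, hA⟩ := aux_rat_int_s17 _ hA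
  obtain ⟨N, hN⟩ := aux_rat_int_s17 _ hN
  have hM : ((d : ℚ) * (2 * y)) ^ 2 = ((d * (A ^ 2 - 4 * N) : ℤ) : ℚ) := by
    push_cast
    rw [hA, hN]; ring
  obtain ⟨C, hC⟩ := aux_rat_int_s17 ((d : ℚ) * (2 * y)) (by
    refine IsIntegral.of_pow (n := 2) (by norm_num) ?_
    rw [hM]
    exact isIntegral_algebraMap (R := ℤ) (A := ℚ))
  rw [← hC] at hM
  have hM' : C ^ 2 = d * (A ^ 2 - 4 * N) := by exact_mod_cast hM
  have hdz : Squarefree (d : ℤ) := Int.squarefree_natCast.mpr hd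
  obtain ⟨B, rfl⟩ : (d : ℤ) ∣ C :=
    (hdz.dvd_pow_iff_dvd (by norm_num : (2:ℕ) ≠ 0)).mp ⟨_, hM'⟩
  have hd0 : (d : ℚ) ≠ 0 := by positivity
  have hB : (B : ℚ) = 2 * y := by
    push_cast at hC
    exact mul_left_cancel₀ hd0 hC
  have hz0 : (d : ℤ) ≠ 0 := by positivity
  have hAB : (d : ℤ) * B ^ 2 = A ^ 2 - 4 * N := by
    apply mul_left_cancel₀ hz0
    rw [← hM']; ring
  obtain ⟨q, hq⟩ : ∃ q : ℤ, (d : ℤ) = 4 * q + 2 ∨ (d : ℤ) = 4 * q + 3 := ⟨d / 4, by omega⟩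
  have : Even A ∧ Even B := by
    rcases Int.even_or_odd' A with ⟨a, rfl | rfl⟩ <;>
    rcases Int.even_or_odd' B with ⟨b, rfl | rfl⟩ <;>
    rcases hq with hq | hq <;> rw [hq] at hAB <;> ring_nf at hAB <;>
    first
    | exact ⟨even_two_mul _, even_two_mul _⟩
    | (exfalso; omega)
  obtain ⟨⟨a, rfl⟩, ⟨b, rfl⟩⟩ := this
  refine ⟨a, b, ?_⟩
  have hx : x = a := by push_cast at hA; linarith
  have hy : y = b := by push_cast at hB; linarith
  rw [← hxy, hx, hy]; simp

theorem not_square_mod_16_in_real_quadratic_2_3_mod_4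
    (d : ℕ) (hd : Squarefree d) (hdpos : 0 < d) (hd4 : d % 4 = 2 ∨ d % 4 = 3)
    -- `K = ℚ(√d)`
    (K : Type*) [Field K] [NumberField K]
    (s : K) (hs : s ^ 2 = (d : K)) (hK2 : Module.finrank ℚ K = 2)
    (r : ℕ) (hr : r.Prime) (hodd : Odd r)
    (hr8 : r % 8 ≠ 1) (hrd8 : r % 8 ≠ d % 8) :
    ¬ ∃ v : 𝓞 K, (r : 𝓞 K) - v ^ 2 ∈ Ideal.span ({(16 : 𝓞 K)} : Set (𝓞 K)) := by
  rintro ⟨v, hv⟩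
  obtain ⟨hli, hrep⟩ := aux_rep d hd hdpos hd4 K s hs hK2
  obtain ⟨w, hw⟩ := Ideal.mem_span_singleton.mp hv
  obtain ⟨a, b, hab⟩ := hrep v
  obtain ⟨e, f, hef⟩ := hrep w
  have hw' : (r : K) - (v : K) ^ 2 = 16 * (w : K) := by
    have := congrArg (algebraMap (𝓞 K) K) hw
    rw [map_sub, map_mul, map_pow, map_natCast, map_ofNat] at this
    exact this
  rw [hab, hef] at hw'
  obtain ⟨h1, h2⟩ := hli ((r - a ^ 2 - d * b ^ 2 - 16 * e : ℤ) : ℚ) ((-2 * a * b - 16 * f : ℤ) : ℚ) (by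
    push_cast
    linear_combination hw' + (b : K) ^ 2 * hs)
  have h1' : (r - a ^ 2 - d * b ^ 2 - 16 * e : ℤ) = 0 := by exact_mod_cast h1
  have h2' : (-2 * a * b - 16 * f : ℤ) = 0 := by exact_mod_cast h2
  have h3 : (2 ^ 3 : ℤ) ∣ a * b := ⟨-f, by linarith⟩
  have hsq : ∀ n : ℤ, Odd n → ∃ k, n ^ 2 = 8 * k + 1 := by
    intro n hn
    have := Int.sq_mod_four_eq_one_of_odd hn
    obtain ⟨k, hk⟩ := Int.eight_dvd_sq_sub_one_of_odd hn
    exact ⟨k, by linarith⟩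
  have h2p : Prime (2 : ℤ) := Int.prime_two
  rcases Int.even_or_odd a with ha | ha
  · rcases Int.even_or_odd b with hb | hb
    · obtain ⟨a', rfl⟩ := ha
      obtain ⟨b', rfl⟩ := hb
      obtain ⟨r', rfl⟩ := hodd
      push_cast at h1'
      ring_nf at h1'
      have : (2 : ℤ) ∣ 1 := ⟨-r' + 2 * a' ^ 2 + 2 * d * b' ^ 2 + 8 * e, by linarith⟩
      omega
    · obtain ⟨c, rfl⟩ : (2 ^ 3 : ℤ) ∣ a := by
        refine IsCoprime.dvd_of_dvd_mul_right ?_ h3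
        exact (Int.isCoprime_two_left.mpr hb).pow_left
      obtain ⟨k, hk⟩ := hsq b hb
      rw [hk] at h1'
      have : (r : ℤ) - d = 8 * (8 * c ^ 2 + d * k + 2 * e) := by linarith
      omega
  · obtain ⟨c, rfl⟩ : (2 ^ 3 : ℤ) ∣ b := by
      refine IsCoprime.dvd_of_dvd_mul_left ?_ h3
      exact (Int.isCoprime_two_left.mpr ha).pow_left
    obtain ⟨k, hk⟩ := hsq a ha
    rw [hk] at h1'
    have : (r : ℤ) - 1 = 8 * (8 * d * c ^ 2 + k + 2 * e) := by linarith
    omega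
end
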